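/- arXiv:2209.07014 — 2 statements merged into one kernel-verified Lean document; each statement's English description precedes it below -/
import Mathlib

section
/- Suppose Υ_k is positive definite for every k ∈ {0,…,N}. Fix x_0 and (d_k), and define the closed-loop sequences by u_k = −Υ_k^{-1}M_k x_k − Υ_k^{-1}h_k, x_{k+1} = A x_k + B u_k + E d_k, and the costate λ_k := P_{k+1} x_{k+1} + f_{k+1} for k = 0,…,N. Then these sequences satisfy the forward–backward difference equations: 0 = B'R B u_k + B'λ_k + B'R E d_k for all k ∈ {0,…,N}; λ_{k-1} = Q(x_k − r) + A'λ_k for all k ∈ {1,…,N}; and λ_N = P_{N+1}(x_{N+1} − r). -/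
open Matrix Finset

/-!
The map `u ↦ B'RBu + B'λ + B'REd`, evaluated at `λ = P⁺(Ax + Bu + Ed) + f⁺`, equals
`Υu + Mx + h`, so the feedback law is exactly its zero when `Υ` is invertible. Pulling the same
`λ` back by `A'` produces the term `A'P⁺Bu`, which is `M'u` because `P⁺` is symmetric; substituting
the feedback law turns `Q(x − r) + A'λ` into `Px + f`, the previous costate. Symmetry itself
propagates backward along the Riccati recursion.
-/

section CommSemiring

variable {K ι κ ν : Type*} [CommSemiring K] [Fintype ι]

theorem isSymm_transpose_mul_mul {S : Matrix ι ι K} (hS : S.IsSymm) (C : Matrix ι κ K) :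
    (Cᵀ * S * C).IsSymm := by
  rw [IsSymm, transpose_mul, transpose_mul, transpose_transpose, hS.eq, Matrix.mul_assoc]

variable [Fintype κ] [Fintype ν]

theorem stationarity_residual_eq (A P R : Matrix ι ι K) (B : Matrix ι κ K) (E : Matrix ι ν K)
    (x f : ι → K) (u : κ → K) (d : ν → K) :
    (Bᵀ * R * B) *ᵥ u + Bᵀ *ᵥ (P *ᵥ (A *ᵥ x + B *ᵥ u + E *ᵥ d) + f) + (Bᵀ * R * E) *ᵥ d =
      (Bᵀ * (R + P) * B) *ᵥ u + (Bᵀ * P * A) *ᵥ x +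
        ((Bᵀ * (R + P) * E) *ᵥ d + Bᵀ *ᵥ f) := by
  simp only [Matrix.mul_add, Matrix.add_mul, add_mulVec, mulVec_add, ← mulVec_mulVec]
  abel

theorem transpose_mulVec_affine_costate {P : Matrix ι ι K} (hP : P.IsSymm) (A : Matrix ι ι K)
    (B : Matrix ι κ K) (E : Matrix ι ν K) (x f : ι → K) (u : κ → K) (d : ν → K) :
    Aᵀ *ᵥ (P *ᵥ (A *ᵥ x + B *ᵥ u + E *ᵥ d) + f) =
      (Aᵀ * P * A) *ᵥ x + (Bᵀ * P * A)ᵀ *ᵥ u + (Aᵀ * P * E) *ᵥ d + Aᵀ *ᵥ f := by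
  have cross_transpose : (Bᵀ * P * A)ᵀ = Aᵀ * P * B := by
    rw [transpose_mul, transpose_mul, transpose_transpose, hP.eq, Matrix.mul_assoc]
  rw [cross_transpose]
  simp only [mulVec_add, mulVec_mulVec, Matrix.mul_assoc]

end CommSemiring

section CommRing

variable {K ι κ ν : Type*} [CommRing K] [Fintype ι] [Fintype κ] [Fintype ν]

theorem isSymm_riccati_step [DecidableEq κ] {Q P : Matrix ι ι K} {Υ : Matrix κ κ K}
    (hQ : Q.IsSymm) (hP : P.IsSymm) (hΥ : Υ.IsSymm) (A : Matrix ι ι K) (M : Matrix κ ι K) :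
    (Q + Aᵀ * P * A - Mᵀ * Υ⁻¹ * M).IsSymm :=
  (hQ.add (isSymm_transpose_mul_mul hP A)).sub (isSymm_transpose_mul_mul hΥ.inv M)

theorem isSymm_of_riccati_recursion [DecidableEq κ] {N : ℕ} {A Q : Matrix ι ι K}
    {P : ℕ → Matrix ι ι K} {Υ : ℕ → Matrix κ κ K} {M : ℕ → Matrix κ ι K}
    (hQ : Q.IsSymm) (hPterm : (P (N + 1)).IsSymm) (hΥ : ∀ k ≤ N, (Υ k).IsSymm)
    (hP : ∀ k ≤ N, P k = Q + Aᵀ * P (k + 1) * A - (M k)ᵀ * (Υ k)⁻¹ * M k)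
    {k : ℕ} (hk : k ≤ N + 1) : (P k).IsSymm := by
  induction hk using Nat.decreasingInduction with
  | self => exact hPterm
  | of_succ j hj ih =>
    have hjN : j ≤ N := Nat.lt_succ_iff.mp hj
    rw [hP j hjN]
    exact isSymm_riccati_step hQ ih (hΥ j hjN) A (M j)

theorem mulVec_feedback_add_eq_zero [DecidableEq κ] {Υ : Matrix κ κ K} (hΥ : IsUnit Υ)
    (y h : κ → K) : Υ *ᵥ (-(Υ⁻¹ *ᵥ y) - Υ⁻¹ *ᵥ h) + y + h = 0 := by
  have mulVec_inv_mulVec (v : κ → K) : Υ *ᵥ (Υ⁻¹ *ᵥ v) = v := by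
    rw [mulVec_mulVec, mul_nonsing_inv _ ((isUnit_iff_isUnit_det Υ).mp hΥ), one_mulVec]
  rw [mulVec_sub, mulVec_neg, mulVec_inv_mulVec, mulVec_inv_mulVec]
  abel

theorem affine_costate_step {P : Matrix ι ι K} (hP : P.IsSymm) (A Q : Matrix ι ι K)
    (B : Matrix ι κ K) (E : Matrix ι ν K) (W : Matrix κ κ K) {M : Matrix κ ι K}
    (hM : M = Bᵀ * P * A) (r x f : ι → K) (d : ν → K) {u h : κ → K}
    (hu : u = -(W *ᵥ (M *ᵥ x)) - W *ᵥ h) :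
    (Q + Aᵀ * P * A - Mᵀ * W * M) *ᵥ x +
        ((Aᵀ * P * E) *ᵥ d + Aᵀ *ᵥ f - Mᵀ *ᵥ (W *ᵥ h) - Q *ᵥ r) =
      Q *ᵥ (x - r) + Aᵀ *ᵥ (P *ᵥ (A *ᵥ x + B *ᵥ u + E *ᵥ d) + f) := by
  rw [transpose_mulVec_affine_costate hP, ← hM, hu]
  simp only [add_mulVec, sub_mulVec, mulVec_sub, mulVec_neg, ← mulVec_mulVec]
  abel

theorem closed_loop_satisfies_FBDEs_general [DecidableEq κ]
    (N : ℕ) (A Q R : Matrix ι ι K) (B : Matrix ι κ K) (E : Matrix ι ν K) (r : ι → K)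
    (hQ : Q.IsSymm)
    (P : ℕ → Matrix ι ι K) (Υ : ℕ → Matrix κ κ K) (M : ℕ → Matrix κ ι K)
    (hPterm : (P (N + 1)).IsSymm)
    (hΥ : ∀ k ≤ N, Υ k = Bᵀ * (R + P (k + 1)) * B)
    (hM : ∀ k ≤ N, M k = Bᵀ * P (k + 1) * A)
    (hP : ∀ k ≤ N, P k = Q + Aᵀ * P (k + 1) * A - (M k)ᵀ * (Υ k)⁻¹ * M k)
    (hΥsymm : ∀ k ≤ N, (Υ k).IsSymm) (hΥunit : ∀ k ≤ N, IsUnit (Υ k))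
    (d : ℕ → ν → K) (f : ℕ → ι → K) (h : ℕ → κ → K)
    (hfterm : f (N + 1) = -(P (N + 1) *ᵥ r))
    (hh : ∀ k ≤ N, h k = (Bᵀ * (R + P (k + 1)) * E) *ᵥ d k + Bᵀ *ᵥ f (k + 1))
    (hf : ∀ k ≤ N, f k = (Aᵀ * P (k + 1) * E) *ᵥ d k + Aᵀ *ᵥ f (k + 1)
            - (M k)ᵀ *ᵥ ((Υ k)⁻¹ *ᵥ h k) - Q *ᵥ r)
    (x : ℕ → ι → K) (u : ℕ → κ → K) (lam : ℕ → ι → K)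
    (hu : ∀ k ≤ N, u k = -((Υ k)⁻¹ *ᵥ (M k *ᵥ x k)) - (Υ k)⁻¹ *ᵥ h k)
    (hx : ∀ k ≤ N, x (k + 1) = A *ᵥ x k + B *ᵥ u k + E *ᵥ d k)
    (hlam : ∀ k ≤ N, lam k = P (k + 1) *ᵥ x (k + 1) + f (k + 1)) :
    (∀ k ≤ N, 0 = (Bᵀ * R * B) *ᵥ u k + Bᵀ *ᵥ lam k + (Bᵀ * R * E) *ᵥ d k)
    ∧ (∀ k, 1 ≤ k → k ≤ N → lam (k - 1) = Q *ᵥ (x k - r) + Aᵀ *ᵥ lam k)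
    ∧ lam N = P (N + 1) *ᵥ (x (N + 1) - r) := by
  refine ⟨fun k hk ↦ ?stationarity, fun k one_le_k hk ↦ ?costate, ?terminal⟩
  case stationarity =>
    rw [hlam k hk, hx k hk, stationarity_residual_eq, ← hΥ k hk, ← hM k hk, ← hh k hk, hu k hk,
      mulVec_feedback_add_eq_zero (hΥunit k hk)]
  case costate =>
    have P_succ_symm : (P (k + 1)).IsSymm :=
      isSymm_of_riccati_recursion hQ hPterm hΥsymm hP (Nat.succ_le_succ hk)
    rw [hlam (k - 1) ((Nat.sub_le k 1).trans hk), Nat.sub_add_cancel one_le_k, hlam k hk, hx k hk,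
      hP k hk, hf k hk]
    exact affine_costate_step P_succ_symm A Q B E _ (hM k hk) r _ _ _ (hu k hk)
  case terminal =>
    rw [hlam N le_rfl, hfterm, mulVec_sub, sub_eq_add_neg]

end CommRing

/-- **The closed-loop sequences solve the forward–backward difference equations.**
With `u_k = −Υ_k⁻¹ M_k x_k − Υ_k⁻¹ h_k`, `x_{k+1} = A x_k + B u_k + E d_k` and the
costate `λ_k = P_{k+1} x_{k+1} + f_{k+1}`, the FBDEs of the maximum principle hold:
`0 = B'R B u_k + B'λ_k + B'R E d_k`, `λ_{k-1} = Q(x_k − r) + A'λ_k`, and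
`λ_N = P_{N+1}(x_{N+1} − r)`. -/
theorem closed_loop_satisfies_FBDEs
    (n m N : ℕ)
    (A Q R : Matrix (Fin n) (Fin n) ℝ)
    (B E : Matrix (Fin n) (Fin m) ℝ)
    (r : Fin n → ℝ)
    (hQ : Q.PosSemidef) (hR : R.PosSemidef)
    (P : ℕ → Matrix (Fin n) (Fin n) ℝ)
    (Υ : ℕ → Matrix (Fin m) (Fin m) ℝ)
    (M : ℕ → Matrix (Fin m) (Fin n) ℝ)
    (hPterm : (P (N + 1)).PosSemidef)
    (hΥ : ∀ k ≤ N, Υ k = Bᵀ * (R + P (k + 1)) * B)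
    (hM : ∀ k ≤ N, M k = Bᵀ * P (k + 1) * A)
    (hP : ∀ k ≤ N, P k = Q + Aᵀ * P (k + 1) * A - (M k)ᵀ * (Υ k)⁻¹ * M k)
    (hΥpos : ∀ k ≤ N, (Υ k).PosDef)
    (d : ℕ → Fin m → ℝ)
    (f : ℕ → Fin n → ℝ) (h : ℕ → Fin m → ℝ)
    (hfterm : f (N + 1) = -(P (N + 1) *ᵥ r))
    (hh : ∀ k ≤ N, h k = (Bᵀ * (R + P (k + 1)) * E) *ᵥ d k + Bᵀ *ᵥ f (k + 1))
    (hf : ∀ k ≤ N, f k = (Aᵀ * P (k + 1) * E) *ᵥ d k + Aᵀ *ᵥ f (k + 1)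
            - (M k)ᵀ *ᵥ ((Υ k)⁻¹ *ᵥ h k) - Q *ᵥ r)
    -- the closed-loop state, control and costate sequences
    (x : ℕ → Fin n → ℝ) (u : ℕ → Fin m → ℝ) (lam : ℕ → Fin n → ℝ)
    (hu : ∀ k ≤ N, u k = -((Υ k)⁻¹ *ᵥ (M k *ᵥ x k)) - (Υ k)⁻¹ *ᵥ h k)
    (hx : ∀ k ≤ N, x (k + 1) = A *ᵥ x k + B *ᵥ u k + E *ᵥ d k)
    (hlam : ∀ k ≤ N, lam k = P (k + 1) *ᵥ x (k + 1) + f (k + 1)) :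
    (∀ k ≤ N, 0 = (Bᵀ * R * B) *ᵥ u k + Bᵀ *ᵥ lam k + (Bᵀ * R * E) *ᵥ d k)
    ∧ (∀ k, 1 ≤ k → k ≤ N → lam (k - 1) = Q *ᵥ (x k - r) + Aᵀ *ᵥ lam k)
    ∧ lam N = P (N + 1) *ᵥ (x (N + 1) - r) :=
  closed_loop_satisfies_FBDEs_general N A Q R B E r (isHermitian_iff_isSymm.mp hQ.1) P Υ M
    (isHermitian_iff_isSymm.mp hPterm.1) hΥ hM hP
    (fun k hk ↦ isHermitian_iff_isSymm.mp (hΥpos k hk).1) (fun k hk ↦ (hΥpos k hk).isUnit)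
    d f h hfterm hh hf x u lam hu hx hlam
end

section
/- Suppose the general difference Riccati equation P_k = Q + A'P_{k+1}A − M_k'Υ_k^†M_k (with Υ_k = B'(R + P_{k+1})B, M_k = B'P_{k+1}A, terminal value P_{N+1} = 0, and Υ_k^† the Moore–Penrose pseudo-inverse) satisfies the regular condition Υ_k Υ_k^† M_k = M_k and Υ_k Υ_k^† h_k = h_k for all k ∈ {0,…,N}, where h_k, f_k are given by h_k = B'(R + P_{k+1})E d_k + B'f_{k+1}, f_k = A'P_{k+1}E d_k + A'f_{k+1} − M_k'Υ_k^†h_k − Q r, f_{N+1} = −P_{N+1} r. Then the controller u_k = −Υ_k^† M_k x_k − Υ_k^† h_k minimizes J_N, and the optimal cost equals J_N^* = x_0'P_0 x_0 + 2 x_0'f_0 + Σ_{k=0}^N [ r'Q r + d_k'E'(R + P_{k+1})E d_k + 2 d_k'E'f_{k+1} − h_k'Υ_k^†h_k ]. -/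
open Matrix Finset Classical

/-- `Y` satisfies the four Moore–Penrose conditions for `M`. -/
def IsMoorePenroseInv {m : ℕ} (M Y : Matrix (Fin m) (Fin m) ℝ) : Prop :=
  M * Y * M = M ∧ Y * M * Y = Y ∧ (M * Y)ᵀ = M * Y ∧ (Y * M)ᵀ = Y * M

/-- The Moore–Penrose pseudo-inverse of a real square matrix (it always exists and is
unique, so this classical choice picks it out). -/
noncomputable def mpinv {m : ℕ} (M : Matrix (Fin m) (Fin m) ℝ) : Matrix (Fin m) (Fin m) ℝ :=
  if h : ∃ Y, IsMoorePenroseInv M Y then h.choose else 0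


/-!
The function `V k x = x ⬝ᵥ P k *ᵥ x + 2 * (x ⬝ᵥ f k)` is, up to a constant, the cost-to-go. Adding
the stage cost at time `k` to `V (k + 1)` along the dynamics gives a quadratic function of `u k` with
quadratic part `Υ k` and linear part `M k *ᵥ x k + h k`. The regular condition puts this linear part
in the range of `Υ k`, so the square can be completed without inverting `Υ k`; the Riccati equations
say exactly that what remains is `V k` plus a constant. Telescoping, the cost of any trajectory is a
constant depending only on `x 0` plus a sum of values of the forms `Υ k`, which vanish for the
proposed controller. These forms are nonnegative because the Joseph form of the Riccati equation,
`P = Q + (A - B K)ᵀ P₁ (A - B K) + (B K)ᵀ R (B K)` with `K = Υ† M`, propagates positive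
semidefiniteness backwards in time.
-/

section QuadraticForms

variable {𝕜 ι κ : Type*} [CommRing 𝕜] [Fintype ι] [Fintype κ]

theorem dotProduct_transpose_mulVec_eq_mulVec_dotProduct (B : Matrix ι κ 𝕜) (z : κ → 𝕜)
    (w : ι → 𝕜) : z ⬝ᵥ (Bᵀ *ᵥ w) = (B *ᵥ z) ⬝ᵥ w := by
  rw [dotProduct_transpose_mulVec, dotProduct_comm]

omit [Fintype κ] in
theorem isSymm_transpose_mul_mul_same {P : Matrix ι ι 𝕜} (hP : P.IsSymm) (B : Matrix ι κ 𝕜) :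
    (Bᵀ * P * B).IsSymm := by
  simp [IsSymm, transpose_mul, hP.eq, Matrix.mul_assoc]

theorem dotProduct_mulVec_comm_of_isSymm {P : Matrix ι ι 𝕜} (hP : P.IsSymm) (a b : ι → 𝕜) :
    a ⬝ᵥ (P *ᵥ b) = b ⬝ᵥ (P *ᵥ a) := by
  rw [← dotProduct_transpose_mulVec, hP.eq]

theorem add_dotProduct_mulVec_add_of_isSymm {P : Matrix ι ι 𝕜} (hP : P.IsSymm) (a b : ι → 𝕜) :
    (a + b) ⬝ᵥ (P *ᵥ (a + b)) = a ⬝ᵥ (P *ᵥ a) + 2 * (a ⬝ᵥ (P *ᵥ b)) + b ⬝ᵥ (P *ᵥ b) := by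
  simp only [mulVec_add, dotProduct_add, add_dotProduct, dotProduct_mulVec_comm_of_isSymm hP b a]
  ring

theorem sub_dotProduct_mulVec_sub_of_isSymm {P : Matrix ι ι 𝕜} (hP : P.IsSymm) (a b : ι → 𝕜) :
    (a - b) ⬝ᵥ (P *ᵥ (a - b)) = a ⬝ᵥ (P *ᵥ a) - 2 * (a ⬝ᵥ (P *ᵥ b)) + b ⬝ᵥ (P *ᵥ b) := by
  simpa [sub_eq_add_neg, mulVec_neg] using add_dotProduct_mulVec_add_of_isSymm hP a (-b)

theorem dotProduct_mulVec_add_two_mul_eq_complete_square {U : Matrix ι ι 𝕜} (hU : U.IsSymm)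
    {w g : ι → 𝕜} (hw : U *ᵥ w = g) (u : ι → 𝕜) :
    u ⬝ᵥ (U *ᵥ u) + 2 * (u ⬝ᵥ g) = (u + w) ⬝ᵥ (U *ᵥ (u + w)) - g ⬝ᵥ w := by
  rw [add_dotProduct_mulVec_add_of_isSymm hU, hw, dotProduct_comm w g]
  ring

theorem joseph_form_eq_riccati_form (A : Matrix ι ι 𝕜) (B : Matrix ι κ 𝕜) {P R : Matrix ι ι 𝕜}
    (hP : P.IsSymm) {K : Matrix κ ι 𝕜} (hK : Bᵀ * (R + P) * B * K = Bᵀ * P * A) :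
    (A - B * K)ᵀ * P * (A - B * K) + (B * K)ᵀ * R * (B * K) =
      Aᵀ * P * A - (Bᵀ * P * A)ᵀ * K :=
  calc
    _ = Aᵀ * P * A - Aᵀ * P * B * K - Kᵀ * (Bᵀ * P * A)
          + Kᵀ * (Bᵀ * (R + P) * B * K) := by
      simp only [transpose_sub, transpose_mul, Matrix.sub_mul, Matrix.mul_sub, Matrix.add_mul,
        Matrix.mul_add, Matrix.mul_assoc]
      abel
    _ = Aᵀ * P * A - (Bᵀ * P * A)ᵀ * K := by
      rw [hK, sub_add_cancel]
      simp only [transpose_mul, transpose_transpose, hP.eq, Matrix.mul_assoc]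

end QuadraticForms

/-- The quadratic function `x ↦ x ⬝ᵥ P x + 2 x ⬝ᵥ f`, the form taken by the cost-to-go up to an
additive constant. -/
def quadraticValue {𝕜 ι : Type*} [CommRing 𝕜] [Fintype ι] (P : Matrix ι ι 𝕜) (f x : ι → 𝕜) : 𝕜 :=
  x ⬝ᵥ (P *ᵥ x) + 2 * (x ⬝ᵥ f)

/-- One time step of a linear-quadratic tracking problem: the dynamics `x ↦ A x + B u + E d` with
known disturbance `d`, the weights `Q` and `R`, and the reference `r`. The state, the control and
the disturbance are indexed by `ι`, `κ` and `δ`. -/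
structure LQStage (𝕜 ι κ δ : Type*) where
  A : Matrix ι ι 𝕜
  B : Matrix ι κ 𝕜
  E : Matrix ι δ 𝕜
  Q : Matrix ι ι 𝕜
  R : Matrix ι ι 𝕜
  r : ι → 𝕜
  d : δ → 𝕜

namespace LQStage

variable {𝕜 ι κ δ : Type*} [CommRing 𝕜] [Fintype ι] [Fintype κ] [Fintype δ]

/-- The state reached from `x` under the control `u`. -/
def next (S : LQStage 𝕜 ι κ δ) (x : ι → 𝕜) (u : κ → 𝕜) : ι → 𝕜 :=
  S.A *ᵥ x + S.B *ᵥ u + S.E *ᵥ S.d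

/-- The running cost of the stage, in which `R` weighs the whole input `B u + E d`. -/
def cost (S : LQStage 𝕜 ι κ δ) (x : ι → 𝕜) (u : κ → 𝕜) : 𝕜 :=
  (x - S.r) ⬝ᵥ (S.Q *ᵥ (x - S.r))
    + (S.B *ᵥ u + S.E *ᵥ S.d) ⬝ᵥ (S.R *ᵥ (S.B *ᵥ u + S.E *ᵥ S.d))

/-- The contribution of the stage to the optimal cost that does not depend on the state, for a
cost-to-go `quadraticValue P₁ f₁` after the stage. -/
def costOffset (S : LQStage 𝕜 ι κ δ) (Y : Matrix κ κ 𝕜) (h : κ → 𝕜) (P₁ : Matrix ι ι 𝕜)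
    (f₁ : ι → 𝕜) : 𝕜 :=
  S.r ⬝ᵥ (S.Q *ᵥ S.r) + (S.E *ᵥ S.d) ⬝ᵥ ((S.R + P₁) *ᵥ (S.E *ᵥ S.d))
    + 2 * ((S.E *ᵥ S.d) ⬝ᵥ f₁) - h ⬝ᵥ (Y *ᵥ h)

/-- One backward step of the Riccati equation, from `(P₁, f₁)` to `(P, f)`, together with the
regular condition. The matrix `Y` stands for the pseudo-inverse of `Υ`. -/
structure IsRegularRiccatiStep (S : LQStage 𝕜 ι κ δ) (Υ Y : Matrix κ κ 𝕜) (M : Matrix κ ι 𝕜)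
    (h : κ → 𝕜) (P₁ : Matrix ι ι 𝕜) (f₁ : ι → 𝕜) (P : Matrix ι ι 𝕜) (f : ι → 𝕜) : Prop where
  Υ_eq : Υ = S.Bᵀ * (S.R + P₁) * S.B
  M_eq : M = S.Bᵀ * P₁ * S.A
  P_eq : P = S.Q + S.Aᵀ * P₁ * S.A - Mᵀ * Y * M
  h_eq : h = (S.Bᵀ * (S.R + P₁) * S.E) *ᵥ S.d + S.Bᵀ *ᵥ f₁
  f_eq : f = (S.Aᵀ * P₁ * S.E) *ᵥ S.d + S.Aᵀ *ᵥ f₁ - Mᵀ *ᵥ (Y *ᵥ h) - S.Q *ᵥ S.r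
  regular_M : Υ * Y * M = M
  regular_h : (Υ * Y) *ᵥ h = h

namespace IsRegularRiccatiStep

variable {S : LQStage 𝕜 ι κ δ} {Υ Y : Matrix κ κ 𝕜} {M : Matrix κ ι 𝕜} {h : κ → 𝕜}
  {P₁ P : Matrix ι ι 𝕜} {f₁ f : ι → 𝕜}

theorem isSymm_Υ (H : S.IsRegularRiccatiStep Υ Y M h P₁ f₁ P f) (hR : S.R.IsSymm)
    (hP₁ : P₁.IsSymm) : Υ.IsSymm :=
  H.Υ_eq ▸ isSymm_transpose_mul_mul_same (hR.add hP₁) S.B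

theorem Υ_mulVec_Y_mulVec (H : S.IsRegularRiccatiStep Υ Y M h P₁ f₁ P f) (x : ι → 𝕜) :
    Υ *ᵥ (Y *ᵥ (M *ᵥ x + h)) = M *ᵥ x + h := by
  rw [mulVec_mulVec, mulVec_add, mulVec_mulVec, H.regular_M, H.regular_h]

theorem dotProduct_Y_mulVec_add (H : S.IsRegularRiccatiStep Υ Y M h P₁ f₁ P f)
    (hR : S.R.IsSymm) (hP₁ : P₁.IsSymm) (x : ι → 𝕜) :
    (M *ᵥ x + h) ⬝ᵥ (Y *ᵥ (M *ᵥ x + h)) =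
      (M *ᵥ x) ⬝ᵥ (Y *ᵥ (M *ᵥ x)) + 2 * ((M *ᵥ x) ⬝ᵥ (Y *ᵥ h)) + h ⬝ᵥ (Y *ᵥ h) := by
  have hMx : Υ *ᵥ (Y *ᵥ (M *ᵥ x)) = M *ᵥ x := by
    rw [mulVec_mulVec, mulVec_mulVec, H.regular_M]
  have hh : Υ *ᵥ (Y *ᵥ h) = h := by rw [mulVec_mulVec, H.regular_h]
  -- `Y` need not be symmetric, but it is on the range of `Υ`.
  have cross : h ⬝ᵥ (Y *ᵥ (M *ᵥ x)) = (M *ᵥ x) ⬝ᵥ (Y *ᵥ h) := by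
    have := dotProduct_mulVec_comm_of_isSymm (H.isSymm_Υ hR hP₁) (Y *ᵥ (M *ᵥ x)) (Y *ᵥ h)
    rwa [hMx, hh, dotProduct_comm, dotProduct_comm (Y *ᵥ h)] at this
  simp only [mulVec_add, dotProduct_add, add_dotProduct, cross]
  ring

theorem cost_add_quadraticValue_next_eq_quadratic
    (H : S.IsRegularRiccatiStep Υ Y M h P₁ f₁ P f) (hR : S.R.IsSymm) (hP₁ : P₁.IsSymm)
    (x : ι → 𝕜) (u : κ → 𝕜) :
    S.cost x u + quadraticValue P₁ f₁ (S.next x u) =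
      S.cost x 0 + quadraticValue P₁ f₁ (S.next x 0)
        + (u ⬝ᵥ (Υ *ᵥ u) + 2 * (u ⬝ᵥ (M *ᵥ x + h))) := by
  have quadratic_part : u ⬝ᵥ (Υ *ᵥ u) =
      (S.B *ᵥ u) ⬝ᵥ (S.R *ᵥ (S.B *ᵥ u)) + (S.B *ᵥ u) ⬝ᵥ (P₁ *ᵥ (S.B *ᵥ u)) := by
    simp only [H.Υ_eq, ← mulVec_mulVec, add_mulVec, dotProduct_add,
      dotProduct_transpose_mulVec_eq_mulVec_dotProduct]
  have linear_part : u ⬝ᵥ (M *ᵥ x + h) =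
      (S.B *ᵥ u) ⬝ᵥ (P₁ *ᵥ (S.A *ᵥ x)) + (S.B *ᵥ u) ⬝ᵥ (S.R *ᵥ (S.E *ᵥ S.d))
        + (S.B *ᵥ u) ⬝ᵥ (P₁ *ᵥ (S.E *ᵥ S.d)) + (S.B *ᵥ u) ⬝ᵥ f₁ := by
    simp only [H.M_eq, H.h_eq, ← mulVec_mulVec, add_mulVec, dotProduct_add,
      dotProduct_transpose_mulVec_eq_mulVec_dotProduct]
    ring
  have next_eq : S.next x u = S.B *ᵥ u + S.next x 0 := by
    simp only [next, mulVec_zero]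
    abel
  rw [next_eq, quadratic_part, linear_part]
  simp only [cost, quadraticValue, add_dotProduct_mulVec_add_of_isSymm hP₁,
    add_dotProduct_mulVec_add_of_isSymm hR]
  simp only [next, mulVec_zero, mulVec_add, dotProduct_add, add_dotProduct, zero_dotProduct,
    dotProduct_zero]
  ring

theorem cost_zero_add_quadraticValue_next_zero
    (H : S.IsRegularRiccatiStep Υ Y M h P₁ f₁ P f) (hQ : S.Q.IsSymm) (hR : S.R.IsSymm)
    (hP₁ : P₁.IsSymm) (x : ι → 𝕜) :
    S.cost x 0 + quadraticValue P₁ f₁ (S.next x 0) =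
      quadraticValue P f x + S.costOffset Y h P₁ f₁
        + (M *ᵥ x + h) ⬝ᵥ (Y *ᵥ (M *ᵥ x + h)) := by
  have quadratic_part : x ⬝ᵥ (P *ᵥ x) =
      x ⬝ᵥ (S.Q *ᵥ x) + (S.A *ᵥ x) ⬝ᵥ (P₁ *ᵥ (S.A *ᵥ x))
        - (M *ᵥ x) ⬝ᵥ (Y *ᵥ (M *ᵥ x)) := by
    simp only [H.P_eq, sub_mulVec, add_mulVec, ← mulVec_mulVec, dotProduct_sub, dotProduct_add,
      dotProduct_transpose_mulVec_eq_mulVec_dotProduct]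
  have linear_part : x ⬝ᵥ f =
      (S.A *ᵥ x) ⬝ᵥ (P₁ *ᵥ (S.E *ᵥ S.d)) + (S.A *ᵥ x) ⬝ᵥ f₁
        - (M *ᵥ x) ⬝ᵥ (Y *ᵥ h) - x ⬝ᵥ (S.Q *ᵥ S.r) := by
    simp only [H.f_eq, ← mulVec_mulVec, dotProduct_sub, dotProduct_add,
      dotProduct_transpose_mulVec_eq_mulVec_dotProduct]
  rw [H.dotProduct_Y_mulVec_add hR hP₁]
  simp only [cost, costOffset, quadraticValue, next, mulVec_zero, zero_add, add_zero,
    sub_dotProduct_mulVec_sub_of_isSymm hQ, add_dotProduct_mulVec_add_of_isSymm hP₁,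
    quadratic_part, linear_part, add_dotProduct, add_mulVec, dotProduct_add]
  ring

theorem cost_add_quadraticValue_next (H : S.IsRegularRiccatiStep Υ Y M h P₁ f₁ P f)
    (hQ : S.Q.IsSymm) (hR : S.R.IsSymm) (hP₁ : P₁.IsSymm) (x : ι → 𝕜) (u : κ → 𝕜) :
    S.cost x u + quadraticValue P₁ f₁ (S.next x u) =
      quadraticValue P f x + S.costOffset Y h P₁ f₁
        + (u + Y *ᵥ (M *ᵥ x + h)) ⬝ᵥ (Υ *ᵥ (u + Y *ᵥ (M *ᵥ x + h))) := by
  rw [H.cost_add_quadraticValue_next_eq_quadratic hR hP₁,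
    H.cost_zero_add_quadraticValue_next_zero hQ hR hP₁,
    dotProduct_mulVec_add_two_mul_eq_complete_square (H.isSymm_Υ hR hP₁)
      (H.Υ_mulVec_Y_mulVec x)]
  ring

theorem eq_joseph_form (H : S.IsRegularRiccatiStep Υ Y M h P₁ f₁ P f) (hP₁ : P₁.IsSymm) :
    P = S.Q + (S.A - S.B * (Y * M))ᵀ * P₁ * (S.A - S.B * (Y * M))
      + (S.B * (Y * M))ᵀ * S.R * (S.B * (Y * M)) := by
  have hgain : S.Bᵀ * (S.R + P₁) * S.B * (Y * M) = S.Bᵀ * P₁ * S.A := by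
    rw [← H.Υ_eq, ← Matrix.mul_assoc, H.regular_M, H.M_eq]
  rw [add_assoc, joseph_form_eq_riccati_form S.A S.B hP₁ hgain, ← H.M_eq, ← Matrix.mul_assoc,
    ← add_sub_assoc, ← H.P_eq]

section Order

variable [PartialOrder 𝕜] [IsOrderedAddMonoid 𝕜] [StarRing 𝕜] [TrivialStar 𝕜]

theorem posSemidef_Υ (H : S.IsRegularRiccatiStep Υ Y M h P₁ f₁ P f)
    (hR : S.R.PosSemidef) (hP₁ : P₁.PosSemidef) : Υ.PosSemidef := by
  simpa only [H.Υ_eq, conjTranspose_eq_transpose_of_trivial] using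
    (hR.add hP₁).conjTranspose_mul_mul_same S.B

theorem posSemidef (H : S.IsRegularRiccatiStep Υ Y M h P₁ f₁ P f)
    (hQ : S.Q.PosSemidef) (hR : S.R.PosSemidef) (hP₁ : P₁.PosSemidef) : P.PosSemidef := by
  rw [H.eq_joseph_form (isHermitian_iff_isSymm.mp hP₁.isHermitian)]
  simpa only [conjTranspose_eq_transpose_of_trivial] using
    (hQ.add (hP₁.conjTranspose_mul_mul_same (S.A - S.B * (Y * M)))).add
      (hR.conjTranspose_mul_mul_same (S.B * (Y * M)))

end Order

end IsRegularRiccatiStep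

/-- Along the stages `0, …, N` the states `x` follow the dynamics driven by the controls `u`. -/
def IsTrajectory (S : ℕ → LQStage 𝕜 ι κ δ) (N : ℕ) (x : ℕ → ι → 𝕜) (u : ℕ → κ → 𝕜) : Prop :=
  ∀ k ≤ N, x (k + 1) = (S k).next (x k) (u k)

/-- The running costs of the stages `0, …, N` plus a terminal cost with weight `PT` and reference
`rT`. -/
def totalCost (S : ℕ → LQStage 𝕜 ι κ δ) (N : ℕ) (PT : Matrix ι ι 𝕜) (rT : ι → 𝕜)
    (x : ℕ → ι → 𝕜) (u : ℕ → κ → 𝕜) : 𝕜 :=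
  (∑ k ∈ range (N + 1), (S k).cost (x k) (u k)) + (x (N + 1) - rT) ⬝ᵥ (PT *ᵥ (x (N + 1) - rT))

variable {S : ℕ → LQStage 𝕜 ι κ δ} {N : ℕ} {Υ Y : ℕ → Matrix κ κ 𝕜} {M : ℕ → Matrix κ ι 𝕜}
  {h : ℕ → κ → 𝕜} {P : ℕ → Matrix ι ι 𝕜} {f : ℕ → ι → 𝕜}

theorem totalCost_eq_add_sum_deviation (hQ : ∀ k ≤ N, (S k).Q.IsSymm)
    (hR : ∀ k ≤ N, (S k).R.IsSymm) (hP : ∀ k ≤ N, (P (k + 1)).IsSymm)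
    (H : ∀ k ≤ N,
      (S k).IsRegularRiccatiStep (Υ k) (Y k) (M k) (h k) (P (k + 1)) (f (k + 1)) (P k) (f k))
    {rT : ι → 𝕜} (hfT : f (N + 1) = -(P (N + 1) *ᵥ rT))
    {x : ℕ → ι → 𝕜} {u : ℕ → κ → 𝕜} (hx : IsTrajectory S N x u) :
    totalCost S N (P (N + 1)) rT x u =
      quadraticValue (P 0) (f 0) (x 0)
        + ∑ k ∈ range (N + 1), (S k).costOffset (Y k) (h k) (P (k + 1)) (f (k + 1))
        + rT ⬝ᵥ (P (N + 1) *ᵥ rT)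
        + ∑ k ∈ range (N + 1), (u k + Y k *ᵥ (M k *ᵥ x k + h k)) ⬝ᵥ
            (Υ k *ᵥ (u k + Y k *ᵥ (M k *ᵥ x k + h k))) := by
  let V : ℕ → 𝕜 := fun k => quadraticValue (P k) (f k) (x k)
  have stage : ∀ k ∈ range (N + 1), (S k).cost (x k) (u k) =
      V k - V (k + 1) + (S k).costOffset (Y k) (h k) (P (k + 1)) (f (k + 1))
        + (u k + Y k *ᵥ (M k *ᵥ x k + h k)) ⬝ᵥ
            (Υ k *ᵥ (u k + Y k *ᵥ (M k *ᵥ x k + h k))) := fun k hk => by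
    have hkN := mem_range_succ_iff.mp hk
    have := (H k hkN).cost_add_quadraticValue_next (hQ k hkN) (hR k hkN) (hP k hkN) (x k) (u k)
    rw [← hx k hkN] at this
    linear_combination this
  have terminal : (x (N + 1) - rT) ⬝ᵥ (P (N + 1) *ᵥ (x (N + 1) - rT)) =
      V (N + 1) + rT ⬝ᵥ (P (N + 1) *ᵥ rT) := by
    simp only [V, quadraticValue, hfT, dotProduct_neg,
      sub_dotProduct_mulVec_sub_of_isSymm (hP N le_rfl)]
    ring
  rw [totalCost, sum_congr rfl stage, terminal, sum_add_distrib, sum_add_distrib,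
    sum_range_sub']
  ring

section Order

variable [PartialOrder 𝕜] [IsOrderedAddMonoid 𝕜] [StarRing 𝕜] [TrivialStar 𝕜]

theorem posSemidef_of_isRegularRiccatiStep (hQ : ∀ k ≤ N, (S k).Q.PosSemidef)
    (hR : ∀ k ≤ N, (S k).R.PosSemidef) (hPT : (P (N + 1)).PosSemidef)
    (H : ∀ k ≤ N,
      (S k).IsRegularRiccatiStep (Υ k) (Y k) (M k) (h k) (P (k + 1)) (f (k + 1)) (P k) (f k))
    {k : ℕ} (hk : k ≤ N + 1) : (P k).PosSemidef := by
  induction hk using Nat.decreasingInduction with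
  | self => exact hPT
  | of_succ k hk ih =>
    have hkN := Nat.lt_succ_iff.mp hk
    exact (H k hkN).posSemidef (hQ k hkN) (hR k hkN) ih

end Order

end LQStage

open LQStage in
theorem finite_horizon_controller_pseudoinverse_general {𝕜 ι κ δ : Type*} [CommRing 𝕜]
    [PartialOrder 𝕜] [IsOrderedAddMonoid 𝕜] [StarRing 𝕜] [TrivialStar 𝕜]
    [Fintype ι] [Fintype κ] [Fintype δ]
    {S : ℕ → LQStage 𝕜 ι κ δ} {N : ℕ}
    (hQ : ∀ k ≤ N, (S k).Q.PosSemidef) (hR : ∀ k ≤ N, (S k).R.PosSemidef)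
    {Υ Y : ℕ → Matrix κ κ 𝕜} {M : ℕ → Matrix κ ι 𝕜} {h : ℕ → κ → 𝕜}
    {P : ℕ → Matrix ι ι 𝕜} {f : ℕ → ι → 𝕜} {rT : ι → 𝕜}
    (hPT : (P (N + 1)).PosSemidef) (hfT : f (N + 1) = -(P (N + 1) *ᵥ rT))
    (H : ∀ k ≤ N,
      (S k).IsRegularRiccatiStep (Υ k) (Y k) (M k) (h k) (P (k + 1)) (f (k + 1)) (P k) (f k))
    {xs : ℕ → ι → 𝕜} {us : ℕ → κ → 𝕜}
    (hus : ∀ k ≤ N, us k = -(Y k *ᵥ (M k *ᵥ xs k)) - Y k *ᵥ h k)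
    (hxs : IsTrajectory S N xs us) :
    (∀ (x : ℕ → ι → 𝕜) (u : ℕ → κ → 𝕜), x 0 = xs 0 → IsTrajectory S N x u →
      totalCost S N (P (N + 1)) rT xs us ≤ totalCost S N (P (N + 1)) rT x u) ∧
    totalCost S N (P (N + 1)) rT xs us =
      quadraticValue (P 0) (f 0) (xs 0)
        + ∑ k ∈ range (N + 1), (S k).costOffset (Y k) (h k) (P (k + 1)) (f (k + 1))
        + rT ⬝ᵥ (P (N + 1) *ᵥ rT) := by
  have hP : ∀ k ≤ N, (P (k + 1)).PosSemidef := fun k hk =>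
    posSemidef_of_isRegularRiccatiStep hQ hR hPT H (Nat.succ_le_succ hk)
  have cost_eq {x : ℕ → ι → 𝕜} {u : ℕ → κ → 𝕜} (hx : IsTrajectory S N x u) :=
    totalCost_eq_add_sum_deviation
      (fun k hk => isHermitian_iff_isSymm.mp (hQ k hk).isHermitian)
      (fun k hk => isHermitian_iff_isSymm.mp (hR k hk).isHermitian)
      (fun k hk => isHermitian_iff_isSymm.mp (hP k hk).isHermitian) H hfT hx
  have no_deviation : ∀ k ∈ range (N + 1), us k + Y k *ᵥ (M k *ᵥ xs k + h k) = 0 := fun k hk => by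
    rw [hus k (mem_range_succ_iff.mp hk), mulVec_add]
    abel
  have no_excess : ∑ k ∈ range (N + 1), (us k + Y k *ᵥ (M k *ᵥ xs k + h k)) ⬝ᵥ
      (Υ k *ᵥ (us k + Y k *ᵥ (M k *ᵥ xs k + h k))) = 0 :=
    sum_eq_zero fun k hk => by rw [no_deviation k hk, zero_dotProduct]
  have optimal_cost := cost_eq hxs
  rw [no_excess, add_zero] at optimal_cost
  refine ⟨fun x u hx0 hx => ?_, optimal_cost⟩
  rw [optimal_cost, cost_eq hx, hx0]
  refine le_add_of_nonneg_right (sum_nonneg fun k hk => ?_)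
  have hkN := mem_range_succ_iff.mp hk
  simpa only [star_trivial] using
    ((H k hkN).posSemidef_Υ (hR k hkN) (hP k hkN)).dotProduct_mulVec_nonneg _

/-- **Finite-horizon optimal controller under the regular condition (Lemma 2).**
If the general difference Riccati equation with pseudo-inverses and terminal value
`P_{N+1} = 0` satisfies the regular condition `Υ_k Υ_k† M_k = M_k` and
`Υ_k Υ_k† h_k = h_k`, then `u_k = −Υ_k† M_k x_k − Υ_k† h_k` minimizes `J_N` and the
optimal cost equals the stated expression. -/
theorem finite_horizon_controller_pseudoinverse
    (n m N : ℕ)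
    (A Q R : Matrix (Fin n) (Fin n) ℝ)
    (B E : Matrix (Fin n) (Fin m) ℝ)
    (r : Fin n → ℝ)
    (hQ : Q.PosSemidef) (hR : R.PosSemidef)
    (P : ℕ → Matrix (Fin n) (Fin n) ℝ)
    (Υ : ℕ → Matrix (Fin m) (Fin m) ℝ)
    (M : ℕ → Matrix (Fin m) (Fin n) ℝ)
    (hPterm : P (N + 1) = 0)
    (hΥ : ∀ k ≤ N, Υ k = Bᵀ * (R + P (k + 1)) * B)
    (hM : ∀ k ≤ N, M k = Bᵀ * P (k + 1) * A)
    (hP : ∀ k ≤ N, P k = Q + Aᵀ * P (k + 1) * A - (M k)ᵀ * mpinv (Υ k) * M k)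
    (d : ℕ → Fin m → ℝ)
    (f : ℕ → Fin n → ℝ) (h : ℕ → Fin m → ℝ)
    (hfterm : f (N + 1) = -(P (N + 1) *ᵥ r))
    (hh : ∀ k ≤ N, h k = (Bᵀ * (R + P (k + 1)) * E) *ᵥ d k + Bᵀ *ᵥ f (k + 1))
    (hf : ∀ k ≤ N, f k = (Aᵀ * P (k + 1) * E) *ᵥ d k + Aᵀ *ᵥ f (k + 1)
            - (M k)ᵀ *ᵥ (mpinv (Υ k) *ᵥ h k) - Q *ᵥ r)
    -- the regular condition
    (hregM : ∀ k ≤ N, Υ k * mpinv (Υ k) * M k = M k)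
    (hregh : ∀ k ≤ N, (Υ k * mpinv (Υ k)) *ᵥ h k = h k)
    -- the cost functional `J_N`
    (J : (ℕ → Fin n → ℝ) → (ℕ → Fin m → ℝ) → ℝ)
    (hJ : ∀ x u, J x u =
        (∑ k ∈ range (N + 1),
          ((x k - r) ⬝ᵥ (Q *ᵥ (x k - r))
            + (B *ᵥ u k + E *ᵥ d k) ⬝ᵥ (R *ᵥ (B *ᵥ u k + E *ᵥ d k))))
        + (x (N + 1) - r) ⬝ᵥ (P (N + 1) *ᵥ (x (N + 1) - r)))
    -- the closed-loop trajectory generated by the proposed controller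
    (x0 : Fin n → ℝ)
    (xs : ℕ → Fin n → ℝ) (us : ℕ → Fin m → ℝ)
    (hxs0 : xs 0 = x0)
    (hus : ∀ k ≤ N, us k = -(mpinv (Υ k) *ᵥ (M k *ᵥ xs k)) - mpinv (Υ k) *ᵥ h k)
    (hxs : ∀ k ≤ N, xs (k + 1) = A *ᵥ xs k + B *ᵥ us k + E *ᵥ d k) :
    (∀ (x : ℕ → Fin n → ℝ) (u : ℕ → Fin m → ℝ),
        x 0 = x0 → (∀ k ≤ N, x (k + 1) = A *ᵥ x k + B *ᵥ u k + E *ᵥ d k) →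
        J xs us ≤ J x u)
    ∧ J xs us
        = x0 ⬝ᵥ (P 0 *ᵥ x0) + 2 * (x0 ⬝ᵥ f 0)
          + ∑ k ∈ range (N + 1),
              (r ⬝ᵥ (Q *ᵥ r)
                + (E *ᵥ d k) ⬝ᵥ ((R + P (k + 1)) *ᵥ (E *ᵥ d k))
                + 2 * ((E *ᵥ d k) ⬝ᵥ f (k + 1))
                - h k ⬝ᵥ (mpinv (Υ k) *ᵥ h k)) := by
  let S : ℕ → LQStage ℝ (Fin n) (Fin m) (Fin m) := fun k => ⟨A, B, E, Q, R, r, d k⟩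
  obtain rfl : J = LQStage.totalCost S N (P (N + 1)) r := funext₂ hJ
  subst hxs0
  have optimal := finite_horizon_controller_pseudoinverse_general (S := S)
    (fun _ _ => hQ) (fun _ _ => hR) (hPterm ▸ .zero) hfterm
    (fun k hk => ⟨hΥ k hk, hM k hk, hP k hk, hh k hk, hf k hk, hregM k hk, hregh k hk⟩) hus hxs
  have terminal_eq_zero : r ⬝ᵥ (P (N + 1) *ᵥ r) = 0 := by simp [hPterm]
  rwa [terminal_eq_zero, add_zero] at optimal
end
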